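/- arXiv:2003.10251 — 2 statements merged into one kernel-verified Lean document; each statement's English description precedes it below -/
import Mathlib

section
/- Let n ≥ 1 and let T₁, T₂ be n×n integer matrices with nonzero determinant. Write V(T) ⊆ ℤⁿ for the set consisting of the zero vector together with the n columns of T. Then there exists v ∈ ℤⁿ with V(T₁) = v + V(T₂) (i.e., the two vertex sets are translates of each other) if and only if there exists R ∈ 𝔓_n with T₁ = T₂·Rᵀ. -/
open Matrix

/-- The matrix `P_{n,i}`: the identity matrix except that every entry of its
`i`-th column equals `-1`. -/
def Pmat {n : ℕ} (i : Fin n) : Matrix (Fin n) (Fin n) ℤ :=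
  Matrix.of fun j l => if l = i then -1 else if j = l then 1 else 0

/-- The permutation matrix of the permutation `σ`. -/
def permMat {n : ℕ} (σ : Equiv.Perm (Fin n)) : Matrix (Fin n) (Fin n) ℤ :=
  Matrix.of fun j l => if j = σ l then 1 else 0

/-- `𝔓_n`: the subgroup of `GL_n(ℤ)` (the group of units of the ring of `n × n`
integer matrices) generated by the permutation matrices together with the matrices
`P_{n,1}, …, P_{n,n}`, viewed as a set of integer matrices. -/
def frakP (n : ℕ) : Set (Matrix (Fin n) (Fin n) ℤ) :=
  (fun u : (Matrix (Fin n) (Fin n) ℤ)ˣ => (u : Matrix (Fin n) (Fin n) ℤ)) ''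
    (Subgroup.closure {u : (Matrix (Fin n) (Fin n) ℤ)ˣ |
      (∃ σ : Equiv.Perm (Fin n), (u : Matrix (Fin n) (Fin n) ℤ) = permMat σ) ∨
      (∃ i : Fin n, (u : Matrix (Fin n) (Fin n) ℤ) = Pmat i)} : Set _)

/-- `V(T)`: the set consisting of the zero vector together with the `n` columns
of the matrix `T`; the vertex set of the lattice simplex `Δ(T)`. -/
def vertexSet {n : ℕ} (T : Matrix (Fin n) (Fin n) ℤ) : Set (Fin n → ℤ) :=
  insert (0 : Fin n → ℤ) (Set.range fun j => Tᵀ j)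

theorem mul_permMat_tr {n : ℕ} (T : Matrix (Fin n) (Fin n) ℤ) (σ : Equiv.Perm (Fin n))
    (k j : Fin n) : (T * (permMat σ)ᵀ) k j = T k (σ.symm j) := by
  rw [Matrix.mul_apply, Finset.sum_eq_single (σ.symm j)]
  · simp [permMat]
  · intro b _ hb
    have : j ≠ σ b := by rintro rfl; simp at hb
    simp [permMat, this]
  · simp

theorem mul_Pmat_tr {n : ℕ} (T : Matrix (Fin n) (Fin n) ℤ) (i k j : Fin n) :
    (T * (Pmat i)ᵀ) k j = if j = i then - T k i else T k j - T k i := by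
  have : ∀ l, (Pmat i)ᵀ l j =
      (if l = j then (if j = i then (0:ℤ) else 1) else 0) - (if l = i then 1 else 0) := by
    intro l
    simp only [Pmat, Matrix.transpose_apply, Matrix.of_apply]
    split_ifs <;> grind
  rw [Matrix.mul_apply]
  simp only [this, mul_sub, Finset.sum_sub_distrib, mul_ite, mul_one, mul_zero,
    Finset.sum_ite_eq', Finset.mem_univ, if_true]
  split_ifs <;> simp_all

theorem Pmat_sq {n : ℕ} (i : Fin n) : Pmat i * Pmat i = 1 := by
  rw [← Matrix.transpose_inj, Matrix.transpose_mul, Matrix.transpose_one]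
  ext k j
  rw [mul_Pmat_tr]
  simp only [Pmat, Matrix.transpose_apply, Matrix.of_apply, Matrix.one_apply]
  split_ifs <;> grind

theorem permMat_mul_inv {n : ℕ} (σ : Equiv.Perm (Fin n)) : permMat σ * permMat σ⁻¹ = 1 := by
  rw [← Matrix.transpose_inj, Matrix.transpose_mul, Matrix.transpose_one]
  ext k j
  rw [mul_permMat_tr]
  simp only [permMat, Matrix.transpose_apply, Matrix.of_apply, Matrix.one_apply]
  have : (σ.symm j = σ⁻¹ k) ↔ k = j := by
    change σ.symm j = σ.symm k ↔ _
    rw [σ.symm.injective.eq_iff, eq_comm]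
  simp [eq_comm]

theorem permMat_mem {n : ℕ} (σ : Equiv.Perm (Fin n)) : permMat σ ∈ frakP n :=
  ⟨⟨permMat σ, permMat σ⁻¹, permMat_mul_inv σ, by simpa using permMat_mul_inv σ⁻¹⟩,
    Subgroup.subset_closure (Or.inl ⟨σ, rfl⟩), rfl⟩

theorem Pmat_mem {n : ℕ} (i : Fin n) : Pmat i ∈ frakP n :=
  ⟨⟨Pmat i, Pmat i, Pmat_sq i, Pmat_sq i⟩,
    Subgroup.subset_closure (Or.inr ⟨i, rfl⟩), rfl⟩

theorem frakP_mul {n : ℕ} {A B : Matrix (Fin n) (Fin n) ℤ} (hA : A ∈ frakP n)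
    (hB : B ∈ frakP n) : A * B ∈ frakP n := by
  obtain ⟨u, hu, rfl⟩ := hA
  obtain ⟨w, hw, rfl⟩ := hB
  exact ⟨u * w, mul_mem hu hw, rfl⟩

theorem vs_perm {n : ℕ} (T : Matrix (Fin n) (Fin n) ℤ) (σ : Equiv.Perm (Fin n)) :
    vertexSet (T * (permMat σ)ᵀ) = vertexSet T := by
  have : (fun j => (T * (permMat σ)ᵀ)ᵀ j) = (fun j => Tᵀ j) ∘ σ.symm := by
    funext j k
    exact mul_permMat_tr T σ k j
  unfold vertexSet
  rw [this, σ.symm.surjective.range_comp]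

theorem vs_P {n : ℕ} (T : Matrix (Fin n) (Fin n) ℤ) (i : Fin n) :
    vertexSet (T * (Pmat i)ᵀ) = (fun x => -(Tᵀ i) + x) '' vertexSet T := by
  have h : ∀ j, (T * (Pmat i)ᵀ)ᵀ j = if j = i then -(Tᵀ i) + 0 else -(Tᵀ i) + Tᵀ j := by
    intro j
    funext k
    rw [Matrix.transpose_apply, mul_Pmat_tr]
    split_ifs
    · simp
    · simp; ring
  ext x
  simp only [vertexSet, Set.mem_insert_iff, Set.mem_range, Set.mem_image, h]
  constructor
  · rintro (rfl | ⟨j, rfl⟩)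
    · exact ⟨Tᵀ i, Or.inr ⟨i, rfl⟩, by simp⟩
    · split_ifs
      · exact ⟨0, Or.inl rfl, rfl⟩
      · exact ⟨_, Or.inr ⟨j, rfl⟩, rfl⟩
  · rintro ⟨y, (rfl | ⟨j, rfl⟩), rfl⟩
    · exact Or.inr ⟨i, by simp⟩
    · by_cases hj : j = i
      · subst hj; left; simp
      · exact Or.inr ⟨j, by simp [hj]⟩

theorem vs_eq {n : ℕ} (A B : Matrix (Fin n) (Fin n) ℤ) (hA : A.det ≠ 0)
    (h : vertexSet A = vertexSet B) : ∃ σ, A = B * (permMat σ)ᵀ := by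
  have key : ∀ j, ∃ l, Bᵀ l = Aᵀ j := by
    intro j
    have : Aᵀ j ∈ vertexSet B := h ▸ Or.inr ⟨j, rfl⟩
    rcases this with h0 | h0
    · exact absurd (Matrix.det_eq_zero_of_column_eq_zero j (fun k => congrFun h0 k)) hA
    · exact h0
  choose f hf using key
  have inj : Function.Injective f := by
    intro a b hab
    by_contra hne
    have e : Aᵀ a = Aᵀ b := by rw [← hf, ← hf, hab]
    exact hA (Matrix.det_zero_of_column_eq hne (fun k => congrFun e k))
  refine ⟨(Equiv.ofBijective f (Finite.injective_iff_bijective.1 inj)).symm, ?_⟩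
  ext k j
  rw [mul_permMat_tr]
  exact (congrFun (hf j) k).symm

/-- The vertex sets of the lattice simplices `Δ(T₁)` and `Δ(T₂)` are translates of each
other iff `T₁ = T₂ · Rᵀ` for some `R ∈ 𝔓_n`: right multiplication by `𝔓_nᵀ` realizes
exactly the reorderings of the vertices of the simplex. -/
theorem vertexSet_translate_iff
    (n : ℕ) (hn : 1 ≤ n) (T₁ T₂ : Matrix (Fin n) (Fin n) ℤ)
    (h₁ : T₁.det ≠ 0) (h₂ : T₂.det ≠ 0) :
    (∃ v : Fin n → ℤ, vertexSet T₁ = (fun x => v + x) '' vertexSet T₂) ↔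
    (∃ R ∈ frakP n, T₁ = T₂ * Rᵀ) := by
  constructor
  · rintro ⟨v, hv⟩
    have h0 : (0 : Fin n → ℤ) ∈ vertexSet T₁ := Or.inl rfl
    rw [hv] at h0
    obtain ⟨w, hw, hvw⟩ := h0
    have hv' : v = -w := eq_neg_of_add_eq_zero_left hvw
    subst hv'
    rcases hw with rfl | ⟨i, rfl⟩
    · obtain ⟨σ, hσ⟩ := vs_eq T₁ T₂ h₁ (by simpa using hv)
      exact ⟨_, permMat_mem σ, hσ⟩
    · obtain ⟨σ, hσ⟩ := vs_eq T₁ (T₂ * (Pmat i)ᵀ) h₁ (by rw [vs_P]; exact hv)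
      exact ⟨_, frakP_mul (permMat_mem σ) (Pmat_mem i), by
        rw [hσ, Matrix.transpose_mul, Matrix.mul_assoc]⟩
  · rintro ⟨R, ⟨u, hu, rfl⟩, rfl⟩
    clear h₁ h₂
    dsimp only
    induction hu using Subgroup.closure_induction generalizing T₂ with
    | mem u hu =>
      rcases hu with ⟨σ, hσ⟩ | ⟨i, hi⟩
      · exact ⟨0, by rw [hσ, vs_perm]; simp⟩
      · exact ⟨_, by rw [hi, vs_P]⟩
    | one => exact ⟨0, by simp⟩
    | mul x y _ _ hx hy =>
      obtain ⟨a, ha⟩ := hy T₂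
      obtain ⟨b, hb⟩ := hx (T₂ * (y : Matrix (Fin n) (Fin n) ℤ)ᵀ)
      refine ⟨b + a, ?_⟩
      rw [Units.val_mul, Matrix.transpose_mul, ← Matrix.mul_assoc, hb, ha, Set.image_image]
      simp only [add_assoc]
    | inv x _ hx =>
      obtain ⟨a, ha⟩ := hx (T₂ * ((x⁻¹ : (Matrix (Fin n) (Fin n) ℤ)ˣ) : Matrix (Fin n) (Fin n) ℤ)ᵀ)
      rw [Matrix.mul_assoc, ← Matrix.transpose_mul, Units.mul_inv, Matrix.transpose_one,
        Matrix.mul_one] at ha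
      refine ⟨-a, ?_⟩
      rw [ha, Set.image_image]
      simp
end

section
/- Let n ≥ 1 and k ≥ 1. Let A_n = {x ∈ ℤ^{n+1} : x₀ + x₁ + ⋯ + x_n = 0}, a full-rank lattice in the hyperplane H = {x ∈ ℝ^{n+1} : x₀ + ⋯ + x_n = 0}. Call two additive subgroups S₁, S₂ ≤ A_n of index k isometric if there is a linear isometry g : H → H with g(A_n) = A_n and g(S₁) = S₂. Call a set V ⊂ ℤⁿ a lattice n-simplex of normalized volume k if V has exactly n+1 elements and, for some (equivalently, any) enumeration v₀, v₁, …, v_n of V, the matrix with columns v₁ − v₀, …, v_n − v₀ has determinant of absolute value k; call two such sets V₁, V₂ unimodularly equivalent if there exist L ∈ GL_n(ℤ) and t ∈ ℤⁿ with V₁ = {L·x + t : x ∈ V₂}. Then the number of isometry classes of index-k subgroups of A_n equals the number of unimodular equivalence classes of lattice n-simplices of normalized volume k. -/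
open Matrix

/-- The hyperplane `H = {x ∈ ℝ^{n+1} : x₀ + x₁ + ⋯ + x_n = 0}`. -/
def Hyp (n : ℕ) : Submodule ℝ (EuclideanSpace ℝ (Fin (n + 1))) where
  carrier := {x | ∑ i, x i = 0}
  add_mem' := by
    intro a b ha hb
    simp only [Set.mem_setOf_eq, PiLp.add_apply] at *
    rw [Finset.sum_add_distrib, ha, hb, add_zero]
  zero_mem' := by simp
  smul_mem' := by
    intro c x hx
    simp only [Set.mem_setOf_eq, PiLp.smul_apply, smul_eq_mul] at *
    rw [← Finset.mul_sum, hx, mul_zero]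

/-- The root lattice `A_n = {x ∈ ℤ^{n+1} : x₀ + x₁ + ⋯ + x_n = 0}`: the points of the
hyperplane `H` all of whose coordinates are integers. -/
noncomputable def rootAn (n : ℕ) : AddSubgroup (Hyp n) where
  carrier := {x | ∀ i, ∃ m : ℤ, (x : EuclideanSpace ℝ (Fin (n + 1))) i = (m : ℝ)}
  zero_mem' := fun i => ⟨0, by simp⟩
  add_mem' := by
    rintro a b ha hb i
    obtain ⟨p, hp⟩ := ha i
    obtain ⟨q, hq⟩ := hb i
    exact ⟨p + q, by push_cast; simp [hp, hq]⟩
  neg_mem' := by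
    rintro a ha i
    obtain ⟨p, hp⟩ := ha i
    exact ⟨-p, by push_cast; simp [hp]⟩

/-- `V ⊆ ℤⁿ` is (the vertex set of) a lattice `n`-simplex of normalized volume `k`:
`V` has exactly `n + 1` elements and for some enumeration `v₀, v₁, …, v_n` of `V` the
matrix with columns `v₁ - v₀, …, v_n - v₀` has determinant of absolute value `k`. -/
def IsLatticeSimplex (n k : ℕ) (V : Set (Fin n → ℤ)) : Prop :=
  V.ncard = n + 1 ∧
  ∃ v : Fin (n + 1) → (Fin n → ℤ), Set.range v = V ∧
    (Matrix.of fun i j : Fin n => v j.succ i - v 0 i).det.natAbs = k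

namespace AnProof

theorem exists_res {X : Type*} (π : Equiv.Perm X) (q : ℕ)
    (h : ∀ x (t : ℤ), (π ^ t) x = x → (q : ℤ) ∣ t) :
    ∃ r : X → ZMod q, ∀ x, r (π x) = r x + 1 := by
  classical
  let s := Equiv.Perm.SameCycle.setoid π
  have h1 : ∀ x, ∃ j : ℤ, (π ^ j) (Quotient.out (Quotient.mk s x)) = x := by
    intro x
    exact Quotient.mk_out (s := s) x
  choose j hj using h1
  refine ⟨fun x => (j x : ZMod q), fun x => ?_⟩
  have hq : Quotient.mk s (π x) = Quotient.mk s x := by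
    apply Quotient.sound
    exact (Equiv.Perm.SameCycle.refl π x).apply_left
  have e1 := hj (π x)
  have e2 := hj x
  rw [hq] at e1
  set b := Quotient.out (Quotient.mk s x)
  have e3 : (π ^ (j (π x) - (j x + 1))) b = b := by
    have : (π ^ (j x + 1)) b = (π ^ (j (π x))) b := by
      rw [e1, add_comm, _root_.zpow_add, Equiv.Perm.mul_apply, e2]; simp
    rw [sub_eq_neg_add, _root_.zpow_add, Equiv.Perm.mul_apply, ← this, ← Equiv.Perm.mul_apply, ← _root_.zpow_add]
    simp
  have := h _ _ e3
  have h2 : ((j (π x) : ℤ) : ZMod q) = ((j x + 1 : ℤ) : ZMod q) := by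
    rw [← sub_eq_zero, ← Int.cast_sub]
    exact (ZMod.intCast_zmod_eq_zero_iff_dvd _ _).2 this
  simpa using h2

theorem exists_cycle {X : Type*} [Finite X] [Nonempty X] (π : Equiv.Perm X) (p : ℕ) (hp : p.Prime) :
    ∃ a : ℕ, (∀ x (t : ℤ), (π ^ t) x = x → ((p ^ a : ℕ) : ℤ) ∣ t) ∧
      ∃ x, ∃ t : ℤ, (π ^ t) x = x ∧ ¬ ((p ^ (a + 1) : ℕ) : ℤ) ∣ t := by
  by_contra hcon
  push Not at hcon
  have key : ∀ a : ℕ, ∀ x (t : ℤ), (π ^ t) x = x → ((p ^ a : ℕ) : ℤ) ∣ t := by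
    intro a
    induction a with
    | zero => intros; simp
    | succ a ih => exact hcon a ih
  have hpos : 0 < orderOf π := orderOf_pos π
  have := key (orderOf π) (Classical.arbitrary X) (orderOf π) (by
    rw [zpow_natCast, pow_orderOf_eq_one]; rfl)
  rw [Int.natCast_dvd_natCast] at this
  exact absurd (Nat.le_of_dvd hpos this) (not_le.2 (Nat.lt_pow_self hp.one_lt))

section
variable {X : Type*} [Fintype X]

open Classical in
noncomputable def zMap (π : Equiv.Perm X) (C : Set X) {q : ℕ} (r : X → ZMod q) (m : ℤ) :
    (X → ℤ) →ₗ[ℤ] (X → ℤ) where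
  toFun x a := if a ∈ C then x a - x (π a) else m * x a - ∑ b, if b ∈ C ∧ r b = r a then x b else 0
  map_add' x y := by
    ext a
    by_cases h : a ∈ C
    · simp [h]; ring
    · simp only [h, if_false, Pi.add_apply]
      rw [mul_add, sub_add_sub_comm, ← Finset.sum_add_distrib]
      congr 1
      refine Finset.sum_congr rfl fun b _ => ?_
      split_ifs <;> simp
  map_smul' c x := by
    ext a
    by_cases h : a ∈ C
    · simp [h]; ring
    · simp only [h, if_false, Pi.smul_apply, smul_eq_mul, RingHom.id_apply]
      rw [mul_sub, Finset.mul_sum]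
      congr 1
      · ring
      refine Finset.sum_congr rfl fun b _ => ?_
      split_ifs <;> simp

open Classical in
noncomputable def wMap (C : Set X) {q : ℕ} (r : X → ZMod q) (m : ℤ) :
    (X → ℤ) →ₗ[ℤ] (X → ℤ) where
  toFun x a := if a ∈ C then x a - (∑ b, if b ∉ C ∧ r b = r a then x b else 0) else m * x a
  map_add' x y := by
    ext a
    by_cases h : a ∈ C
    · simp only [h, if_true, Pi.add_apply]
      rw [sub_add_sub_comm, ← Finset.sum_add_distrib]
      congr 1
      refine Finset.sum_congr rfl fun b _ => ?_
      split_ifs <;> simp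
    · simp [h]; ring
  map_smul' c x := by
    ext a
    by_cases h : a ∈ C
    · simp only [h, if_true, Pi.smul_apply, smul_eq_mul, RingHom.id_apply]
      rw [mul_sub, Finset.mul_sum]
      congr 1
      refine Finset.sum_congr rfl fun b _ => ?_
      split_ifs <;> simp
    · simp [h]; ring

theorem fibre_card (π : Equiv.Perm X) (C : Set X) (hC : ∀ x, π x ∈ C ↔ x ∈ C) {q : ℕ} [NeZero q]
    (r : X → ZMod q) (hr : ∀ x, r (π x) = r x + 1) :
    ∃ m : ℕ, Nat.card C = q * m ∧ ∀ s, Nat.card {b // b ∈ C ∧ r b = s} = m := by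
  classical
  have step : ∀ s, Nat.card {b // b ∈ C ∧ r b = s + 1} = Nat.card {b // b ∈ C ∧ r b = s} := by
    intro s
    symm
    apply Nat.card_congr
    refine π.subtypeEquiv fun a => ?_
    rw [hC, hr]; simp
  have hall : ∀ t : ℕ, Nat.card {b // b ∈ C ∧ r b = t} = Nat.card {b // b ∈ C ∧ r b = 0} := by
    intro t
    induction t with
    | zero => simp
    | succ t ih => rw [Nat.cast_succ, step, ih]
  have hall' : ∀ s, Nat.card {b // b ∈ C ∧ r b = s} = Nat.card {b // b ∈ C ∧ r b = 0} := by
    intro s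
    have := hall s.val
    rwa [ZMod.natCast_zmod_val] at this
  refine ⟨_, ?_, hall'⟩
  have e : C ≃ Σ s : ZMod q, {b // b ∈ C ∧ r b = s} := 
    { toFun := fun b => ⟨r b, b, b.2, rfl⟩
      invFun := fun b => ⟨b.2.1, b.2.2.1⟩
      left_inv := fun b => rfl
      right_inv := by rintro ⟨s, b, h, rfl⟩; rfl }
  rw [Nat.card_congr e, Nat.card_sigma]
  rw [Finset.sum_congr rfl (fun s _ => hall' s)]
  simp [ZMod.card]

theorem exists_F_prime [Nonempty X] (π : Equiv.Perm X) (p : ℕ) (hp : p.Prime) :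
    ∃ F : (X → ℤ) →ₗ[ℤ] (X → ℤ), (∀ x, F (x ∘ π) = F x ∘ π) ∧ F 1 = 0 ∧ (∀ x, ∑ a, F x a = 0) ∧
      ∀ x, (∀ a, (p : ℤ) ∣ F x a) → ∃ c : ℤ, ∀ a, (p : ℤ) ∣ x a - c := by
  classical
  obtain ⟨e, he, b0, t0, hb0, ht0⟩ := exists_cycle π p hp
  have : NeZero (p ^ e) := ⟨pow_ne_zero _ hp.ne_zero⟩
  obtain ⟨r, hr⟩ := exists_res π (p ^ e) he
  obtain ⟨C, hCdef⟩ : ∃ C : Set X, ∀ x, x ∈ C ↔ π.SameCycle b0 x :=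
    ⟨{x | π.SameCycle b0 x}, fun x => Iff.rfl⟩
  have hC : ∀ x, π x ∈ C ↔ x ∈ C := fun x => by
    rw [hCdef, hCdef]; exact Equiv.Perm.sameCycle_apply_right
  obtain ⟨m, hm, hm'⟩ := fibre_card π C hC r hr
  have hpm : ¬ p ∣ m := by
    intro hdvd
    apply ht0
    have h1 : p ^ (e + 1) ∣ Nat.card C := by
      rw [hm, pow_succ]; exact Nat.mul_dvd_mul_left _ hdvd
    have h2 : (Nat.card C : ℤ) ∣ t0 := by
      have h3 : Nat.card C = Function.minimalPeriod π b0 := by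
        have := MulAction.minimalPeriod_eq_card (a := π) (b := b0)
        rw [← Nat.card_eq_fintype_card] at this
        rw [show (fun x => π • x) = π from rfl] at this
        rw [this]
        refine Nat.card_congr (Equiv.setCongr ?_)
        ext y
        rw [hCdef, MulAction.mem_orbit_iff]
        constructor
        · rintro ⟨i, hi⟩
          exact ⟨⟨π ^ i, i, rfl⟩, hi⟩
        · rintro ⟨⟨_, i, rfl⟩, hi⟩
          exact ⟨i, hi⟩
      rw [h3]
      have := MulAction.zpow_smul_eq_iff_minimalPeriod_dvd (a := π) (b := b0) (n := t0)
      exact this.1 hb0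
    exact (Int.natCast_dvd_natCast.2 h1).trans h2
  have hcard : ∀ s, (Finset.univ.filter (fun b => b ∈ C ∧ r b = s)).card = m := by
    intro s
    rw [← hm' s, Nat.card_eq_fintype_card, Fintype.card_subtype]
  have hpm' : ∀ y : ℤ, (p : ℤ) ∣ m * y → (p : ℤ) ∣ y := by
    intro y hy
    rcases (Nat.prime_iff_prime_int.1 hp).dvd_or_dvd hy with h | h
    · exact absurd (Int.natCast_dvd_natCast.1 h) hpm
    · exact h
  have hinj : ∀ a b : X, r (π a) = r (π b) ↔ r a = r b := by
    intro a b; rw [hr, hr]; simp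
  refine ⟨(wMap C r m) ∘ₗ (zMap π C r m), ?_, ?_, ?_, ?_⟩
  · intro x
    have hz : zMap π C r m (x ∘ π) = zMap π C r m x ∘ π := by
      ext a
      simp only [zMap, LinearMap.coe_mk, AddHom.coe_mk, Function.comp, hC]
      congr 2
      conv_rhs => rw [← Equiv.sum_comp π]
      simp only [hC, hinj]
    rw [LinearMap.comp_apply, hz, LinearMap.comp_apply]
    generalize zMap π C r m x = z
    ext a
    simp only [wMap, LinearMap.coe_mk, AddHom.coe_mk, Function.comp, hC]
    congr 2
    conv_rhs => rw [← Equiv.sum_comp π]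
    simp only [hC, hinj]
  · have : zMap π C r m 1 = 0 := by
      ext a
      by_cases h : a ∈ C
      · simp [zMap, h]
      · simp only [zMap, LinearMap.coe_mk, AddHom.coe_mk, h, if_false, Pi.one_apply]
        rw [← Finset.sum_filter, Finset.sum_const, hcard]
        simp
    rw [LinearMap.comp_apply, this, map_zero]
  · intro x
    rw [LinearMap.comp_apply]
    have hz0 : ∑ a, (if a ∈ C then zMap π C r m x a else 0) = 0 := by
      have : ∀ a, (if a ∈ C then zMap π C r m x a else 0) =
          (if a ∈ C then x a else 0) - (if π a ∈ C then x (π a) else 0) := by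
        intro a
        by_cases h : a ∈ C <;> simp [zMap, h, hC]
      simp only [this]
      rw [Finset.sum_sub_distrib, Equiv.sum_comp π (fun a => if a ∈ C then x a else 0), sub_self]
    generalize zMap π C r m x = z at *
    have : ∀ a, wMap C r m z a = (if a ∈ C then z a else 0) +
        ((if a ∈ C then 0 else m * z a) - ∑ b, if a ∈ C ∧ b ∉ C ∧ r b = r a then z b else 0) := by
      intro a
      by_cases h : a ∈ C <;> simp [wMap, h]
      ring
    simp only [this]
    rw [Finset.sum_add_distrib, hz0, zero_add, Finset.sum_sub_distrib, sub_eq_zero, Finset.sum_comm]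
    refine Finset.sum_congr rfl fun b _ => ?_
    by_cases h : b ∈ C
    · simp [h]
    · simp only [h, if_false, not_false_eq_true, true_and]
      rw [← Finset.sum_filter, Finset.sum_const, ← hcard (r b)]
      simp [eq_comm]
  · intro x hx
    rw [LinearMap.comp_apply] at hx
    have hz : ∀ a, (p : ℤ) ∣ zMap π C r m x a := by
      generalize zMap π C r m x = z at *
      have h1 : ∀ a, a ∉ C → (p : ℤ) ∣ z a := by
        intro a ha
        apply hpm'
        simpa [wMap, ha] using hx a
      intro a
      by_cases ha : a ∈ C
      · have := hx a
        simp only [wMap, LinearMap.coe_mk, AddHom.coe_mk, ha, if_true] at this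
        refine (dvd_sub_left (Finset.dvd_sum fun b _ => ?_)).1 this
        split_ifs with h
        · exact h1 b h.1
        · simp
      · exact h1 a ha
    refine ⟨x b0, ?_⟩
    have hstep : ∀ a ∈ C, (p : ℤ) ∣ x a - x (π a) := by
      intro a ha
      simpa [zMap, ha] using hz a
    have hCc : ∀ a ∈ C, (p : ℤ) ∣ x a - x b0 := by
      intro a ha
      obtain ⟨i, -, -, hi⟩ := Equiv.Perm.SameCycle.exists_pow_eq π ((hCdef a).1 ha)
      have : ∀ i : ℕ, (π ^ i) b0 ∈ C ∧ (p : ℤ) ∣ x ((π ^ i) b0) - x b0 := by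
        intro i
        induction i with
        | zero => simp [hCdef, Equiv.Perm.SameCycle.refl]
        | succ i ih =>
          rw [pow_succ', Equiv.Perm.mul_apply]
          refine ⟨(hC _).2 ih.1, ?_⟩
          have h3 := dvd_sub ih.2 (hstep _ ih.1)
          rwa [show ∀ u v w : ℤ, u - v - (u - w) = w - v by intros; ring] at h3
      rw [← hi]; exact (this i).2
    intro a
    by_cases ha : a ∈ C
    · exact hCc a ha
    · apply hpm'
      have h1 := hz a
      simp only [zMap, LinearMap.coe_mk, AddHom.coe_mk, ha, if_false] at h1
      have h2 : (p : ℤ) ∣ ∑ b, if b ∈ C ∧ r b = r a then x b - x b0 else 0 := by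
        refine Finset.dvd_sum fun b _ => ?_
        split_ifs with h
        · exact hCc b h.1
        · simp
      have h3 := dvd_add h1 h2
      rw [← Finset.sum_filter, ← Finset.sum_filter, Finset.sum_sub_distrib, Finset.sum_const,
        hcard] at h3
      simp only [nsmul_eq_mul] at h3
      rwa [sub_add_sub_cancel, ← mul_sub] at h3

end

section
variable {X : Type*} [Fintype X]

theorem exists_F [Nonempty X] (π : Equiv.Perm X) (k : ℕ) (hk : k ≠ 0) :
    ∃ F : (X → ℤ) →ₗ[ℤ] (X → ℤ), (∀ x, F (x ∘ π) = F x ∘ π) ∧ F 1 = 0 ∧ (∀ x, ∑ a, F x a = 0) ∧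
      ∀ p : ℕ, p.Prime → p ∣ k →
      ∀ x, (∀ a, (p : ℤ) ∣ F x a) → ∃ c : ℤ, ∀ a, (p : ℤ) ∣ x a - c := by
  classical
  have h0 : ∀ p : ℕ, ∃ F : (X → ℤ) →ₗ[ℤ] (X → ℤ), p.Prime → (∀ x, F (x ∘ π) = F x ∘ π) ∧ F 1 = 0 ∧
      (∀ x, ∑ a, F x a = 0) ∧
      ∀ x, (∀ a, (p : ℤ) ∣ F x a) → ∃ c : ℤ, ∀ a, (p : ℤ) ∣ x a - c := by
    intro p
    by_cases hp : p.Prime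
    · obtain ⟨F, hF⟩ := exists_F_prime π p hp
      exact ⟨F, fun _ => hF⟩
    · exact ⟨0, fun h => absurd h hp⟩
  choose f hf using h0
  set s := k.primeFactors with hs
  let c : ℕ → ℤ := fun p => ∏ q ∈ s.erase p, (q : ℤ)
  have happ : ∀ x, (∑ p ∈ s, c p • f p) x = ∑ p ∈ s, c p • f p x := by
    intro x; simp [LinearMap.sum_apply]
  have hsp : ∀ p ∈ s, p.Prime := fun p hp => Nat.prime_of_mem_primeFactors hp
  refine ⟨∑ p ∈ s, c p • f p, ?_, ?_, ?_, ?_⟩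
  · intro x
    ext a
    rw [happ, happ]
    simp only [Finset.sum_apply, Function.comp]
    refine Finset.sum_congr rfl fun p hp => ?_
    have := (hf p (hsp p hp)).1 x
    simp only [Pi.smul_apply, this, Function.comp]
  · rw [happ]
    refine Finset.sum_eq_zero fun p hp => ?_
    rw [(hf p (hsp p hp)).2.1, smul_zero]
  · intro x
    rw [happ]
    simp only [Finset.sum_apply]
    rw [Finset.sum_comm]
    refine Finset.sum_eq_zero fun p hp => ?_
    simp only [Pi.smul_apply, smul_eq_mul]
    rw [← Finset.mul_sum, (hf p (hsp p hp)).2.2.1, mul_zero]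
  · intro p hp hpk x hx
    have hps : p ∈ s := Nat.mem_primeFactors.2 ⟨hp, hpk, hk⟩
    refine (hf p hp).2.2.2 x fun a => ?_
    have h1 := hx a
    rw [happ, Finset.sum_apply, ← Finset.add_sum_erase _ _ hps] at h1
    have h2 : (p : ℤ) ∣ ∑ q ∈ s.erase p, (c q • f q x) a := by
      refine Finset.dvd_sum fun q hq => ?_
      simp only [Pi.smul_apply, smul_eq_mul]
      refine Dvd.dvd.mul_right (Finset.dvd_prod_of_mem _ ?_) _
      exact Finset.mem_erase.2 ⟨(Finset.ne_of_mem_erase hq).symm, hps⟩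
    have h3 := (dvd_add_left h2).1 h1
    simp only [Pi.smul_apply, smul_eq_mul] at h3
    have hpp := Nat.prime_iff_prime_int.1 hp
    rcases hpp.dvd_or_dvd h3 with h | h
    · exfalso
      obtain ⟨q, hq, hpq⟩ := (Prime.dvd_finsetProd_iff hpp _).1 h
      have hq' := hsp q (Finset.mem_of_mem_erase hq)
      have := (Nat.prime_dvd_prime_iff_eq hp hq').1 (Int.natCast_dvd_natCast.1 hpq)
      exact Finset.ne_of_mem_erase hq this.symm
    · exact h

theorem surj_prime [Nonempty X] (F : (X → ℤ) →ₗ[ℤ] (X → ℤ)) (hs : ∀ x, ∑ a, F x a = 0)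
    (p : ℕ) (hp : p.Prime)
    (h : ∀ x, (∀ a, (p : ℤ) ∣ F x a) → ∃ c : ℤ, ∀ a, (p : ℤ) ∣ x a - c)
    (y : X → ℤ) (hy : ∑ a, y a = 0) :
    ∃ x y' : X → ℤ, ∑ a, y' a = 0 ∧ y = F x + (p : ℤ) • y' := by
  classical
  have : Fact p.Prime := ⟨hp⟩
  let Fb : (X → ZMod p) →ₗ[ZMod p] (X → ZMod p) :=
    Matrix.toLin' ((LinearMap.toMatrix' F).map (Int.cast : ℤ → ZMod p))
  have hFb : ∀ x : X → ℤ, Fb (fun a => (x a : ZMod p)) = fun a => (F x a : ZMod p) := by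
    intro x
    ext a
    have : F x = (LinearMap.toMatrix' F).mulVec x := by simp
    rw [this]
    simp [Fb, Matrix.mulVec, dotProduct]
  have hlift : ∀ x : X → ZMod p, ∃ x' : X → ℤ, x = fun a => (x' a : ZMod p) := by
    intro x
    choose x' hx' using fun a => ZMod.intCast_surjective (x a)
    exact ⟨x', by ext a; simp [hx']⟩
  let Sb : (X → ZMod p) →ₗ[ZMod p] ZMod p := ∑ a, LinearMap.proj a
  have hSb : ∀ x, Sb x = ∑ a, x a := by intro x; simp [Sb, LinearMap.sum_apply]
  have hker : LinearMap.ker Fb ≤ Submodule.span (ZMod p) {1} := by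
    intro x hx
    obtain ⟨x', rfl⟩ := hlift x
    rw [LinearMap.mem_ker, hFb] at hx
    obtain ⟨c, hc⟩ := h x' fun a => by
      have := congrFun hx a
      exact (ZMod.intCast_zmod_eq_zero_iff_dvd _ _).1 this
    rw [Submodule.mem_span_singleton]
    refine ⟨(c : ZMod p), ?_⟩
    ext a
    have := (ZMod.intCast_zmod_eq_zero_iff_dvd _ _).2 (hc a)
    rw [Int.cast_sub, sub_eq_zero] at this
    simp [this]
  have hle : LinearMap.range Fb ≤ LinearMap.ker Sb := by
    rintro _ ⟨x, rfl⟩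
    obtain ⟨x', rfl⟩ := hlift x
    rw [LinearMap.mem_ker, hSb, hFb, ← Int.cast_sum, hs, Int.cast_zero]
  have hSsurj : LinearMap.range Sb = ⊤ := by
    rw [LinearMap.range_eq_top]
    intro c
    refine ⟨Pi.single (Classical.arbitrary X) c, ?_⟩
    rw [hSb]; simp
  have heq : LinearMap.range Fb = LinearMap.ker Sb := by
    apply Submodule.eq_of_le_of_finrank_le hle
    have r1 := LinearMap.finrank_range_add_finrank_ker Fb
    have r2 := LinearMap.finrank_range_add_finrank_ker Sb
    rw [hSsurj, finrank_top, Module.finrank_self] at r2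
    have r3 := Submodule.finrank_mono hker
    have r4 := finrank_span_singleton (K := ZMod p) (v := (1 : X → ZMod p)) one_ne_zero
    omega
  have hy' : (fun a => (y a : ZMod p)) ∈ LinearMap.range Fb := by
    rw [heq, LinearMap.mem_ker, hSb, ← Int.cast_sum, hy, Int.cast_zero]
  obtain ⟨x, hx⟩ := hy'
  obtain ⟨x', rfl⟩ := hlift x
  rw [hFb] at hx
  have hdiv : ∀ a, (p : ℤ) ∣ y a - F x' a := by
    intro a
    rw [← ZMod.intCast_zmod_eq_zero_iff_dvd, Int.cast_sub, sub_eq_zero]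
    exact (congrFun hx a).symm
  choose y' hy' using hdiv
  refine ⟨x', y', ?_, ?_⟩
  · have : (p : ℤ) * ∑ a, y' a = 0 := by
      rw [Finset.mul_sum, Finset.sum_congr rfl (fun a _ => (hy' a).symm), Finset.sum_sub_distrib,
        hy, hs, sub_zero]
    exact (mul_eq_zero.1 this).resolve_left (by exact_mod_cast hp.ne_zero)
  · ext a
    simp [← hy']

theorem surj_k [Nonempty X] (F : (X → ℤ) →ₗ[ℤ] (X → ℤ)) (hs : ∀ x, ∑ a, F x a = 0)
    (k : ℕ) (hk : k ≠ 0)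
    (h : ∀ p : ℕ, p.Prime → p ∣ k →
      ∀ x, (∀ a, (p : ℤ) ∣ F x a) → ∃ c : ℤ, ∀ a, (p : ℤ) ∣ x a - c) :
    ∀ y : X → ℤ, ∑ a, y a = 0 →
    ∃ x y' : X → ℤ, ∑ a, y' a = 0 ∧ y = F x + (k : ℤ) • y' := by
  suffices H : ∀ j : ℕ, j ∣ k → ∀ y : X → ℤ, ∑ a, y a = 0 →
    ∃ x y' : X → ℤ, ∑ a, y' a = 0 ∧ y = F x + (j : ℤ) • y' from H k dvd_rfl
  intro j
  induction j using induction_on_primes with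
  | zero => intro h0; exact absurd (zero_dvd_iff.1 h0) hk
  | one => intro _ y hy; exact ⟨0, y, hy, by simp⟩
  | prime_mul p a hp ih =>
    intro hd y hy
    obtain ⟨x, y1, hy1, e1⟩ := surj_prime F hs p hp (h p hp ((Dvd.intro _ rfl).trans hd)) y hy
    obtain ⟨x2, y2, hy2, e2⟩ := ih ((Dvd.intro_left _ rfl).trans hd) y1 hy1
    refine ⟨x + (p : ℤ) • x2, y2, hy2, ?_⟩
    rw [e1, e2, map_add, map_smul, smul_add, smul_smul, Nat.cast_mul, add_assoc]

theorem inj_k (F : (X → ℤ) →ₗ[ℤ] (X → ℤ)) (h1 : F 1 = 0)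
    (k : ℕ) (hk : k ≠ 0)
    (h : ∀ p : ℕ, p.Prime → p ∣ k →
      ∀ x, (∀ a, (p : ℤ) ∣ F x a) → ∃ c : ℤ, ∀ a, (p : ℤ) ∣ x a - c) :
    ∀ x y : X → ℤ, F x = (k : ℤ) • y → ∃ (c : ℤ) (x' : X → ℤ), x = c • 1 + (k : ℤ) • x' := by
  suffices H : ∀ j : ℕ, j ∣ k → 
    ∀ x y : X → ℤ, F x = (j : ℤ) • y → ∃ (c : ℤ) (x' : X → ℤ), x = c • 1 + (j : ℤ) • x'
    from H k dvd_rfl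
  intro j
  induction j using induction_on_primes with
  | zero => intro h0; exact absurd (zero_dvd_iff.1 h0) hk
  | one => intro _ x y hy; exact ⟨0, x, by simp⟩
  | prime_mul p a hp ih =>
    intro hd x y hy
    obtain ⟨c, hc⟩ := h p hp ((Dvd.intro _ rfl).trans hd) x fun b => by
      rw [hy]; exact ⟨a * y b, by simp; ring⟩
    choose x1 hx1 using hc
    have ex : x = c • 1 + (p : ℤ) • x1 := by ext b; simp [← hx1]
    have hp0 : (p : ℤ) ≠ 0 := by exact_mod_cast hp.ne_zero
    have e2 : F x1 = (a : ℤ) • y := by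
      rw [ex, map_add, map_smul, map_smul, h1, smul_zero, zero_add, Nat.cast_mul, mul_smul] at hy
      exact smul_right_injective _ hp0 hy
    obtain ⟨c2, x2, e3⟩ := ih ((Dvd.intro_left _ rfl).trans hd) x1 y e2
    refine ⟨c + p * c2, x2, ?_⟩
    rw [ex, e3, smul_add, smul_smul, smul_smul, Nat.cast_mul, add_smul, add_assoc]

end

theorem comap_bij {M N : Type*} [AddCommGroup M] [AddCommGroup N] (B : AddSubgroup N) (F : M →+ N)
    (u : M) (k : ℕ) (hFB : ∀ x, F x ∈ B) (hu : F u = 0)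
    (h1 : ∀ y ∈ B, ∃ x, ∃ y' ∈ B, y = F x + k • y')
    (h2 : ∀ x, ∀ y ∈ B, F x = k • y → ∃ (c : ℤ) (x' : M), x = c • u + k • x') :
    ∃ e : {S : AddSubgroup N // S ≤ B ∧ S.relIndex B = k} ≃
      {T : AddSubgroup M // u ∈ T ∧ T.index = k}, ∀ S, (e S).1 = S.1.comap F := by
  have hkS : ∀ S : AddSubgroup N, S.relIndex B = k → ∀ y ∈ B, k • y ∈ S := by
    intro S hS y hy
    have := AddSubgroup.nsmul_index_mem (S.addSubgroupOf B) ⟨y, hy⟩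
    rw [← hS]; exact this
  have hkT : ∀ T : AddSubgroup M, T.index = k → ∀ y, k • y ∈ T := by
    intro T hT y
    rw [← hT]; exact AddSubgroup.nsmul_index_mem T y
  have hsup : ∀ S : AddSubgroup N, S ≤ B → (∀ y ∈ B, k • y ∈ S) → F.range ⊔ S = B := by
    intro S hSB hS
    apply le_antisymm
    · rw [sup_le_iff]
      refine ⟨?_, hSB⟩
      rintro _ ⟨x, rfl⟩; exact hFB x
    · intro y hy
      obtain ⟨x, y', hy', rfl⟩ := h1 y hy
      exact AddSubgroup.add_mem_sup ⟨x, rfl⟩ (hS _ hy')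
  have hidx : ∀ S : AddSubgroup N, S ≤ B → (∀ y ∈ B, k • y ∈ S) →
      (S.comap F).index = S.relIndex B := by
    intro S hSB hS
    rw [AddSubgroup.index_comap, ← hsup S hSB hS, AddSubgroup.relIndex_sup_right]
  let kB : AddSubgroup N := B.map (nsmulAddMonoidHom k)
  have hkB : ∀ y ∈ B, k • y ∈ kB := fun y hy => ⟨y, hy, rfl⟩
  have hinv : ∀ T : AddSubgroup M, u ∈ T → T.index = k → (T.map F ⊔ kB).comap F = T := by
    intro T huT hT
    ext x
    rw [AddSubgroup.mem_comap, AddSubgroup.mem_sup]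
    constructor
    · rintro ⟨_, ⟨t, ht, rfl⟩, _, ⟨y, hy, rfl⟩, h⟩
      have : F (x - t) = k • y := by
        rw [map_sub, ← h]; simp
      obtain ⟨c, x', hx'⟩ := h2 _ y hy this
      rw [sub_eq_iff_eq_add] at hx'
      rw [hx']
      exact T.add_mem (T.add_mem (T.zsmul_mem huT c) (hkT T hT _)) ht
    · intro hx
      exact ⟨F x, ⟨x, hx, rfl⟩, 0, zero_mem _, by simp⟩
  have hleB : ∀ T : AddSubgroup M, T.map F ⊔ kB ≤ B := by
    intro T
    rw [sup_le_iff]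
    constructor
    · rintro _ ⟨x, _, rfl⟩; exact hFB x
    · rintro _ ⟨y, hy, rfl⟩; exact B.nsmul_mem hy k
  refine ⟨{ toFun := fun S => ⟨S.1.comap F, ?_, ?_⟩
            invFun := fun T => ⟨T.1.map F ⊔ kB, hleB _, ?_⟩
            left_inv := ?_
            right_inv := ?_ }, fun S => rfl⟩
  · simp [hu, zero_mem]
  · rw [hidx S.1 S.2.1 (hkS _ S.2.2), S.2.2]
  · rw [← hidx _ (hleB _) (fun y hy => AddSubgroup.mem_sup_right (hkB y hy)),
      hinv _ T.2.1 T.2.2, T.2.2]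
  · rintro ⟨S, hSB, hS⟩
    apply Subtype.ext
    apply le_antisymm
    · change _ ⊔ _ ≤ S
      rw [sup_le_iff]
      constructor
      · exact AddSubgroup.map_comap_le _ _
      · rintro _ ⟨y, hy, rfl⟩; exact hkS S hS y hy
    · intro y hy
      obtain ⟨x, y', hy', rfl⟩ := h1 y (hSB hy)
      refine AddSubgroup.add_mem_sup ⟨x, ?_, rfl⟩ (hkB _ hy')
      have := S.sub_mem hy (hkS S hS y' hy')
      simpa using this
  · rintro ⟨T, huT, hT⟩
    exact Subtype.ext (hinv T huT hT)

theorem burnside {G α β : Type*} [Group G] [Finite G] [MulAction G α] [MulAction G β] [Finite β]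
    (h : ∀ g : G, ∃ e : α ≃ β, ∀ a, e (g • a) = g • e a) :
    Nat.card (MulAction.orbitRel.Quotient G α) = Nat.card (MulAction.orbitRel.Quotient G β) := by
  classical
  obtain ⟨e1, -⟩ := h 1
  have : Finite α := Finite.of_equiv _ e1.symm
  have := Fintype.ofFinite α
  have := Fintype.ofFinite β
  have := Fintype.ofFinite G
  have a1 := MulAction.sum_card_fixedBy_eq_card_orbits_mul_card_group G α
  have b1 := MulAction.sum_card_fixedBy_eq_card_orbits_mul_card_group G β
  have : ∀ g : G, Fintype.card (MulAction.fixedBy α g) = Fintype.card (MulAction.fixedBy β g) := by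
    intro g
    obtain ⟨e, he⟩ := h g
    refine Fintype.card_congr (e.subtypeEquiv fun a => ?_)
    rw [MulAction.mem_fixedBy, MulAction.mem_fixedBy, ← he, e.apply_eq_iff_eq]
  simp only [this] at a1
  rw [a1] at b1
  rw [Nat.card_eq_fintype_card, Nat.card_eq_fintype_card]
  exact Nat.eq_of_mul_eq_mul_right Fintype.card_pos b1

theorem finite_T {X : Type*} [Finite X] (k : ℕ) (hk : k ≠ 0) (u : X → ℤ) :
    Finite {T : AddSubgroup (X → ℤ) // u ∈ T ∧ T.index = k} := by
  have : NeZero k := ⟨hk⟩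
  let f : (X → ℤ) → (X → ZMod k) := fun x a => (x a : ZMod k)
  refine Finite.of_injective (β := Set (X → ZMod k)) (fun T => f '' (T.1 : Set (X → ℤ))) ?_
  have key : ∀ T T' : {T : AddSubgroup (X → ℤ) // u ∈ T ∧ T.index = k},
      f '' (T.1 : Set (X → ℤ)) = f '' (T'.1 : Set (X → ℤ)) → T.1 ≤ T'.1 := by
    intro T T' h x hx
    have : f x ∈ f '' (T'.1 : Set (X → ℤ)) := h ▸ ⟨x, hx, rfl⟩
    obtain ⟨y, hy, hxy⟩ := this
    have hd : ∀ a, (k : ℤ) ∣ x a - y a := by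
      intro a
      rw [← ZMod.intCast_zmod_eq_zero_iff_dvd, Int.cast_sub, sub_eq_zero]
      exact (congrFun hxy a).symm
    choose z hz using hd
    have : x = y + k • z := by ext a; simp [← hz]
    rw [this]
    refine T'.1.add_mem hy ?_
    have := AddSubgroup.nsmul_index_mem T'.1 z
    rwa [T'.2.2] at this
  intro T T' h
  exact Subtype.ext (le_antisymm (key _ _ h) (key _ _ h.symm))


section Hyper
variable {n : ℕ}

theorem mem_Hyp {x : EuclideanSpace ℝ (Fin (n + 1))} : x ∈ Hyp n ↔ ∑ i, x i = 0 := Iff.rfl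

/-- coordinate permutation on the hyperplane -/
noncomputable def permHyp (σ : Equiv.Perm (Fin (n + 1))) : Hyp n →ₗᵢ[ℝ] Hyp n where
  toFun x := ⟨WithLp.toLp 2 (fun i => x.1 (σ⁻¹ i)), by
    have := mem_Hyp.1 x.2
    rw [mem_Hyp]
    simp only
    rw [Equiv.sum_comp σ⁻¹ (fun i => x.1 i)]
    exact this⟩
  map_add' x y := by ext i; simp
  map_smul' c x := by ext i; simp
  norm_map' x := by
    change ‖(WithLp.toLp 2 (fun i => x.1 (σ⁻¹ i)) : EuclideanSpace ℝ (Fin (n+1)))‖ = ‖x.1‖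
    rw [EuclideanSpace.norm_eq, EuclideanSpace.norm_eq]
    simp only
    rw [Equiv.sum_comp σ⁻¹ (fun i => ‖x.1 i‖ ^ 2)]

theorem permHyp_apply (σ : Equiv.Perm (Fin (n + 1))) (x : Hyp n) (i) :
    (permHyp σ x).1 i = x.1 (σ⁻¹ i) := rfl

theorem permHyp_mul (σ τ : Equiv.Perm (Fin (n + 1))) (x : Hyp n) :
    permHyp (σ * τ) x = permHyp σ (permHyp τ x) := by
  ext i; rw [permHyp_apply, permHyp_apply, permHyp_apply, _root_.mul_inv_rev, Equiv.Perm.mul_apply]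

theorem permHyp_one (x : Hyp n) : permHyp 1 x = x := by
  ext i; rw [permHyp_apply, inv_one, Equiv.Perm.one_apply]

theorem permHyp_inv_apply (σ : Equiv.Perm (Fin (n + 1))) (x : Hyp n) :
    permHyp σ⁻¹ (permHyp σ x) = x := by
  rw [← permHyp_mul]; simp [permHyp_one]

theorem permHyp_apply_inv (σ : Equiv.Perm (Fin (n + 1))) (x : Hyp n) :
    permHyp σ (permHyp σ⁻¹ x) = x := by
  rw [← permHyp_mul]; simp [permHyp_one]

theorem mem_rootAn {x : Hyp n} : x ∈ rootAn n ↔ ∀ i, ∃ m : ℤ, x.1 i = m := Iff.rfl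

theorem permHyp_mem (σ : Equiv.Perm (Fin (n + 1))) {x : Hyp n} (hx : x ∈ rootAn n) :
    permHyp σ x ∈ rootAn n := fun i => hx (σ⁻¹ i)

noncomputable def permHypAdd (σ : Equiv.Perm (Fin (n + 1))) : Hyp n →+ Hyp n :=
  (permHyp σ).toLinearMap.toAddMonoidHom

theorem permHypAdd_apply (σ : Equiv.Perm (Fin (n + 1))) (x : Hyp n) :
  permHypAdd σ x = permHyp σ x := rfl

theorem permHypAdd_map_rootAn (σ : Equiv.Perm (Fin (n + 1))) :
    (rootAn n).map (permHypAdd σ) = rootAn n := by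
  ext x
  constructor
  · rintro ⟨y, hy, rfl⟩; exact permHyp_mem σ hy
  · intro hx
    exact ⟨permHyp σ⁻¹ x, permHyp_mem _ hx, permHyp_apply_inv σ x⟩

/-- sublattices of index k -/
abbrev ASub (n k : ℕ) := {S : AddSubgroup (Hyp n) // S ≤ rootAn n ∧ S.relIndex (rootAn n) = k}

noncomputable instance actA (k : ℕ) : MulAction (Equiv.Perm (Fin (n + 1))) (ASub n k) where
  smul σ S := ⟨S.1.map (permHypAdd σ), by
    constructor
    · exact (AddSubgroup.map_mono S.2.1).trans (permHypAdd_map_rootAn σ).le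
    · have h := AddSubgroup.relIndex_map_map_of_injective S.1 (rootAn n)
        (f := permHypAdd σ) (permHyp σ).injective
      rw [permHypAdd_map_rootAn, S.2.2] at h
      exact h⟩
  one_smul S := by
    apply Subtype.ext
    ext x
    change x ∈ S.1.map (permHypAdd 1) ↔ _
    constructor
    · rintro ⟨y, hy, rfl⟩; rw [permHypAdd_apply, permHyp_one]; exact hy
    · intro hx; exact ⟨x, hx, permHyp_one x⟩
  mul_smul σ τ S := by
    apply Subtype.ext
    change S.1.map (permHypAdd (σ * τ)) = (S.1.map (permHypAdd τ)).map (permHypAdd σ)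
    have h : permHypAdd (σ * τ) = (permHypAdd σ).comp (permHypAdd τ) :=
      AddMonoidHom.ext fun x => permHyp_mul σ τ x
    rw [AddSubgroup.map_map, h]

theorem smulA_val {k : ℕ} (σ : Equiv.Perm (Fin (n + 1))) (S : ASub n k) :
    (σ • S).1 = S.1.map (permHypAdd σ) := rfl

/-- the integral vector `e_a - e_b` -/
theorem root_form (x : Fin (n + 1) → ℤ) (h0 : ∑ i, x i = 0) (h2 : ∑ i, x i ^ 2 = 2) :
    ∃ a b, a ≠ b ∧ x = Pi.single a 1 - Pi.single b 1 := by
  classical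
  have hpos : ∃ a, 0 < x a := by
    by_contra! hcon
    have : ∀ i, x i = 0 := by
      intro i
      exact (Finset.sum_eq_zero_iff_of_nonpos (fun i _ => hcon i)).1 h0 i (Finset.mem_univ i)
    simp [this] at h2
  obtain ⟨a, ha⟩ := hpos
  have hneg : ∃ b, x b < 0 := by
    by_contra! hcon
    have := (Finset.sum_eq_zero_iff_of_nonneg (fun i _ => hcon i)).1 h0 a (Finset.mem_univ a)
    omega
  obtain ⟨b, hb⟩ := hneg
  have hab : b ≠ a := by rintro rfl; omega
  have hbm : b ∈ Finset.univ.erase a := Finset.mem_erase.2 ⟨hab, Finset.mem_univ b⟩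
  rw [← Finset.add_sum_erase _ _ (Finset.mem_univ a), ← Finset.add_sum_erase _ _ hbm] at h2
  have hr : 0 ≤ ∑ i ∈ (Finset.univ.erase a).erase b, x i ^ 2 :=
    Finset.sum_nonneg fun i _ => sq_nonneg _
  have ha1 : x a = 1 := by nlinarith
  have hb1 : x b = -1 := by nlinarith
  have hr0 : ∑ i ∈ (Finset.univ.erase a).erase b, x i ^ 2 = 0 := by
    rw [ha1, hb1] at h2; linarith
  rw [Finset.sum_eq_zero_iff_of_nonneg (fun i _ => sq_nonneg _)] at hr0
  refine ⟨a, b, hab.symm, ?_⟩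
  ext i
  by_cases hia : i = a
  · subst hia; simp [ha1, hab.symm]
  · by_cases hib : i = b
    · subst hib; simp [hb1, hia]
    · have := hr0 i (by simp [hia, hib])
      simpa [hia, hib] using this

/-- the roots `e_{i+1} - e_0` -/
noncomputable def rt (a b : Fin (n + 1)) : Hyp n :=
  ⟨EuclideanSpace.single a 1 - EuclideanSpace.single b 1, by
    rw [mem_Hyp]; simp [Finset.sum_sub_distrib]⟩

theorem rt_apply (a b i : Fin (n + 1)) :
    (rt a b).1 i = (if i = a then 1 else 0) - (if i = b then 1 else 0) := by
  simp [rt, Pi.single_apply]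

theorem rt_mem (a b : Fin (n + 1)) : rt a b ∈ rootAn n := by
  intro i
  refine ⟨(if i = a then 1 else 0) - (if i = b then 1 else 0), ?_⟩
  rw [rt_apply]; push_cast; rfl

theorem inner_rt (a b c d : Fin (n + 1)) :
    inner ℝ (rt a b) (rt c d) = ((((if a = c then 1 else 0) - (if a = d then 1 else 0)) -
      ((if b = c then 1 else 0) - (if b = d then 1 else 0)) : ℤ) : ℝ) := by
  have : inner ℝ (rt a b) (rt c d) = inner ℝ (rt a b).1 (rt c d).1 := rfl
  rw [this, PiLp.inner_apply]
  simp only [rt_apply]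
  simp [sub_mul, mul_sub, Finset.sum_sub_distrib]

theorem hyp_decomp (x : Hyp n) : x = ∑ i : Fin n, x.1 i.succ • rt i.succ 0 := by
  have h0 := mem_Hyp.1 x.2
  rw [Fin.sum_univ_succ] at h0
  ext j
  have : ((∑ i : Fin n, x.1 i.succ • rt i.succ 0 : Hyp n)).1 j =
     ∑ i : Fin n, x.1 i.succ * (rt i.succ 0).1 j := by
    simp
  rw [this]
  refine Fin.cases ?_ (fun j => ?_) j
  · simp only [rt_apply]
    simp [Fin.succ_ne_zero, (Fin.succ_ne_zero _).symm]
    linarith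
  · simp only [rt_apply]
    simp [Fin.succ_ne_zero]

theorem exists_rt (x : Hyp n) (hx : x ∈ rootAn n) (h2 : inner ℝ x x = (2 : ℝ)) :
    ∃ a b, a ≠ b ∧ x = rt a b := by
  choose m hm using hx
  have e0 : ∑ i, m i = 0 := by
    have := mem_Hyp.1 x.2
    simp only [hm] at this
    exact_mod_cast this
  have e2 : ∑ i, m i ^ 2 = 2 := by
    have : inner ℝ x.1 x.1 = (2 : ℝ) := h2
    rw [PiLp.inner_apply] at this
    simp only [hm] at this
    simp only [RCLike.inner_apply, conj_trivial, ← sq] at this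
    exact_mod_cast this
  obtain ⟨a, b, hab, rfl⟩ := root_form m e0 e2
  refine ⟨a, b, hab, ?_⟩
  ext i
  rw [hm, rt_apply]
  simp [Pi.single_apply]

theorem perm_of_isometry (hn : 1 ≤ n) (g : Hyp n →ₗᵢ[ℝ] Hyp n)
    (hg : ∀ x ∈ rootAn n, g x ∈ rootAn n) :
    ∃ σ : Equiv.Perm (Fin (n + 1)), (∀ x, g x = permHyp σ x) ∨ (∀ x, g x = - permHyp σ x) := by
  have h1 : ∀ i : Fin n, ∃ a b, a ≠ b ∧ g (rt i.succ 0) = rt a b := by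
    intro i
    apply exists_rt _ (hg _ (rt_mem _ _))
    rw [LinearIsometry.inner_map_map, inner_rt]
    simp [Fin.succ_ne_zero, (Fin.succ_ne_zero _).symm]
  choose a b hab hgr using h1
  have hin : ∀ i j, i ≠ j → (((if a i = a j then 1 else 0) - (if a i = b j then 1 else 0)) -
      ((if b i = a j then 1 else 0) - (if b i = b j then 1 else 0)) : ℤ) = 1 := by
    intro i j hij
    have : inner ℝ (g (rt i.succ 0)) (g (rt j.succ 0)) = (1 : ℝ) := by
      rw [LinearIsometry.inner_map_map, inner_rt]
      simp [Fin.succ_ne_zero, (Fin.succ_ne_zero _).symm, hij]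
    rw [hgr, hgr, inner_rt] at this
    exact_mod_cast this
  have hcase : ∀ i j, i ≠ j → (a i = a j ∧ b i ≠ b j) ∨ (a i ≠ a j ∧ b i = b j) := by
    intro i j hij
    have := hin i j hij
    have h3 := hab i
    have h4 := hab j
    grind
  have hall : (∀ i j, b i = b j) ∨ (∀ i j, a i = a j) := by
    by_contra hcon
    push Not at hcon
    obtain ⟨⟨i, j, hij⟩, l, l', hl⟩ := hcon
    grind
  -- the case of a common tail
  have main : ∀ (a b : Fin n → Fin (n + 1)) (g : Hyp n →ₗ[ℝ] Hyp n), (∀ i, a i ≠ b i) →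
      (∀ i, g (rt i.succ 0) = rt (a i) (b i)) → (∀ i j, b i = b j) → (∀ i j, i ≠ j → a i ≠ a j) →
      ∃ σ : Equiv.Perm (Fin (n + 1)), ∀ x, g x = permHyp σ x := by
    intro a b g hab hgr hb ha
    let f : Fin (n + 1) → Fin (n + 1) := Fin.cons (b ⟨0, hn⟩) a
    have hf : Function.Injective f := by
      intro i j
      refine Fin.cases ?_ (fun i => ?_) i <;> refine Fin.cases ?_ (fun j => ?_) j
      · simp
      · simp only [f, Fin.cons_zero, Fin.cons_succ]
        intro h; exact absurd (h.symm.trans (hb _ j)) (hab j)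
      · simp only [f, Fin.cons_zero, Fin.cons_succ]
        intro h; exact absurd (h.trans (hb _ i)) (hab i)
      · simp only [f, Fin.cons_succ]
        intro h
        by_contra hij
        exact ha i j (fun h => hij (by rw [h])) h
    let σ : Equiv.Perm (Fin (n + 1)) := Equiv.ofBijective f (Finite.injective_iff_bijective.1 hf)
    refine ⟨σ, fun x => ?_⟩
    have hr : ∀ i : Fin n, g (rt i.succ 0) = permHyp σ (rt i.succ 0) := by
      intro i
      rw [hgr]
      have e1 : σ i.succ = a i := rfl
      have e2 : σ 0 = b i := hb _ _
      ext j
      rw [permHyp_apply, rt_apply, rt_apply, ← e1, ← e2]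
      simp only [Equiv.Perm.inv_eq_iff_eq]
    rw [hyp_decomp x, map_sum, map_sum]
    refine Finset.sum_congr rfl fun i _ => ?_
    rw [map_smul, map_smul, hr]
  rcases hall with h | h
  · obtain ⟨σ, hσ⟩ := main a b g.toLinearMap hab hgr h (by
      intro i j hij; have := hcase i j hij; have := h i j; tauto)
    exact ⟨σ, Or.inl hσ⟩
  · obtain ⟨σ, hσ⟩ := main b a (-g.toLinearMap) (fun i => (hab i).symm) (by
      intro i
      rw [LinearMap.neg_apply]
      change - g _ = _
      rw [hgr]
      ext j
      change - (rt (a i) (b i)).1 j = _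
      rw [rt_apply, rt_apply]; ring) h (by
      intro i j hij; have := hcase i j hij; have := h i j; tauto)
    refine ⟨σ, Or.inr fun x => ?_⟩
    rw [← hσ]
    simp

theorem relA_iff (hn : 1 ≤ n) {k : ℕ} (S₁ S₂ : ASub n k) :
    (∃ g : Hyp n →ₗᵢ[ℝ] Hyp n, g '' (rootAn n : Set (Hyp n)) = rootAn n ∧
        g '' (S₁.1 : Set (Hyp n)) = S₂.1) ↔ ∃ σ : Equiv.Perm (Fin (n + 1)), σ • S₁ = S₂ := by
  constructor
  · rintro ⟨g, hg, hS⟩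
    obtain ⟨σ, hσ⟩ := perm_of_isometry hn g (fun x hx => by
      have : g x ∈ g '' (rootAn n : Set (Hyp n)) := ⟨x, hx, rfl⟩
      rwa [hg] at this)
    refine ⟨σ, Subtype.ext (SetLike.coe_injective ?_)⟩
    rw [smulA_val, ← hS, AddSubgroup.coe_map]
    rcases hσ with h | h
    · exact Set.image_congr fun x _ => (h x).symm
    · ext y
      constructor
      · rintro ⟨x, hx, rfl⟩
        exact ⟨-x, S₁.1.neg_mem hx, by rw [h, map_neg, neg_neg]; rfl⟩
      · rintro ⟨x, hx, rfl⟩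
        exact ⟨-x, S₁.1.neg_mem hx, by rw [h, map_neg]; rfl⟩
  · rintro ⟨σ, rfl⟩
    refine ⟨permHyp σ, ?_, rfl⟩
    conv_rhs => rw [← permHypAdd_map_rootAn σ]
    rfl

end Hyper


section Tside
variable {n : ℕ}

abbrev TSub (n k : ℕ) := {T : AddSubgroup (Fin (n + 1) → ℤ) // (1 : Fin (n + 1) → ℤ) ∈ T ∧ T.index = k}

/-- coordinate permutation on integer vectors -/
def permInt (σ : Equiv.Perm (Fin (n + 1))) : (Fin (n + 1) → ℤ) →+ (Fin (n + 1) → ℤ) where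
  toFun x := fun i => x (σ⁻¹ i)
  map_zero' := rfl
  map_add' _ _ := rfl

theorem permInt_apply (σ : Equiv.Perm (Fin (n + 1))) (x i) : permInt σ x i = x (σ⁻¹ i) := rfl

theorem permInt_mul (σ τ : Equiv.Perm (Fin (n + 1))) (x) :
    permInt (σ * τ) x = permInt σ (permInt τ x) := by
  ext i; rw [permInt_apply, permInt_apply, permInt_apply, _root_.mul_inv_rev, Equiv.Perm.mul_apply]

theorem permInt_one (x : Fin (n + 1) → ℤ) : permInt 1 x = x := by
  ext i; rw [permInt_apply, inv_one, Equiv.Perm.one_apply]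

theorem permInt_inv_apply (σ : Equiv.Perm (Fin (n + 1))) (x) :
    permInt σ⁻¹ (permInt σ x) = x := by
  rw [← permInt_mul]; simp [permInt_one]

theorem permInt_apply_inv (σ : Equiv.Perm (Fin (n + 1))) (x) :
    permInt σ (permInt σ⁻¹ x) = x := by
  rw [← permInt_mul]; simp [permInt_one]

theorem permInt_map_top (σ : Equiv.Perm (Fin (n + 1))) :
    (⊤ : AddSubgroup _).map (permInt σ) = ⊤ := by
  ext x
  exact ⟨fun _ => trivial, fun _ => ⟨permInt σ⁻¹ x, trivial, permInt_apply_inv σ x⟩⟩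

theorem permInt_injective (σ : Equiv.Perm (Fin (n + 1))) : Function.Injective (permInt σ) :=
  Function.LeftInverse.injective (permInt_inv_apply σ)

noncomputable instance actT (k : ℕ) : MulAction (Equiv.Perm (Fin (n + 1))) (TSub n k) where
  smul σ T := ⟨T.1.map (permInt σ), by
    constructor
    · exact ⟨1, T.2.1, rfl⟩
    · have h := AddSubgroup.relIndex_map_map_of_injective T.1 ⊤
        (f := permInt σ) (permInt_injective σ)
      rw [permInt_map_top, AddSubgroup.relIndex_top_right, AddSubgroup.relIndex_top_right, T.2.2] at h
      exact h⟩
  one_smul S := by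
    apply Subtype.ext
    ext x
    change x ∈ S.1.map (permInt 1) ↔ _
    constructor
    · rintro ⟨y, hy, rfl⟩; rw [permInt_one]; exact hy
    · intro hx; exact ⟨x, hx, permInt_one x⟩
  mul_smul σ τ S := by
    apply Subtype.ext
    change S.1.map (permInt (σ * τ)) = (S.1.map (permInt τ)).map (permInt σ)
    have h : permInt (σ * τ) = (permInt σ).comp (permInt τ) :=
      AddMonoidHom.ext fun x => permInt_mul σ τ x
    rw [AddSubgroup.map_map, h]

theorem smulT_val {k : ℕ} (σ : Equiv.Perm (Fin (n + 1))) (T : TSub n k) :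
    (σ • T).1 = T.1.map (permInt σ) := rfl

/-- an integral endomorphism with zero coordinate sums, viewed as a map to the hyperplane -/
noncomputable def toHyp (F : (Fin (n + 1) → ℤ) →ₗ[ℤ] (Fin (n + 1) → ℤ))
    (hs : ∀ x, ∑ a, F x a = 0) : (Fin (n + 1) → ℤ) →+ Hyp n where
  toFun x := ⟨WithLp.toLp 2 (fun i => (F x i : ℝ)), by
    rw [mem_Hyp]
    have := hs x
    simp only
    exact_mod_cast this⟩
  map_zero' := by ext i; simp
  map_add' x y := by ext i; simp

theorem toHyp_apply (F : (Fin (n + 1) → ℤ) →ₗ[ℤ] (Fin (n + 1) → ℤ))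
    (hs : ∀ x, ∑ a, F x a = 0) (x i) : (toHyp F hs x).1 i = (F x i : ℝ) := rfl

theorem exists_coords {y : Hyp n} (hy : y ∈ rootAn n) :
    ∃ m : Fin (n + 1) → ℤ, (∀ i, y.1 i = m i) ∧ ∑ i, m i = 0 := by
  choose m hm using hy
  refine ⟨m, hm, ?_⟩
  have := mem_Hyp.1 y.2
  simp only [hm] at this
  exact_mod_cast this

theorem of_coords (m : Fin (n + 1) → ℤ) (h : ∑ i, m i = 0) :
    ∃ y ∈ rootAn n, ∀ i, y.1 i = m i :=
  ⟨⟨WithLp.toLp 2 (fun i => (m i : ℝ)), by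
    rw [mem_Hyp]; simp only; exact_mod_cast h⟩, fun i => ⟨m i, rfl⟩, fun _ => rfl⟩

theorem card_A_eq_card_T (k : ℕ) (hk : k ≠ 0) :
    Nat.card (MulAction.orbitRel.Quotient (Equiv.Perm (Fin (n + 1))) (ASub n k)) =
    Nat.card (MulAction.orbitRel.Quotient (Equiv.Perm (Fin (n + 1))) (TSub n k)) := by
  haveI : Finite (TSub n k) := finite_T k hk 1
  apply burnside
  intro σ
  obtain ⟨F, hF, h1, hs, hp⟩ := exists_F (X := Fin (n + 1)) σ⁻¹ k hk
  obtain ⟨e, he⟩ := comap_bij (rootAn n) (toHyp F hs) (1 : Fin (n + 1) → ℤ) k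
    (fun x i => ⟨F x i, rfl⟩)
    (by ext i; rw [toHyp_apply, h1]; simp)
    (by
      intro y hy
      obtain ⟨m, hm, hm0⟩ := exists_coords hy
      obtain ⟨x, y', hy0, hxy⟩ := surj_k F hs k hk hp m hm0
      obtain ⟨z, hz, hzc⟩ := of_coords y' hy0
      refine ⟨x, z, hz, ?_⟩
      ext i
      have : (toHyp F hs x + k • z).1 i = (toHyp F hs x).1 i + k • z.1 i := rfl
      rw [this, hm, toHyp_apply, hzc, hxy]
      simp)
    (by
      intro x y hy hxy
      obtain ⟨m, hm, hm0⟩ := exists_coords hy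
      have : F x = (k : ℤ) • m := by
        ext i
        have h := toHyp_apply F hs x i
        rw [hxy] at h
        have h' : (k • y).1 i = k • y.1 i := rfl
        rw [h', hm] at h
        simp at h
        simp
        exact_mod_cast h.symm
      obtain ⟨c, x', hx⟩ := inj_k F h1 k hk hp x m this
      exact ⟨c, x', by rw [hx, natCast_zsmul]⟩)
  refine ⟨e, fun S => Subtype.ext ?_⟩
  rw [he, smulT_val, he, smulA_val]
  have hcomm : ∀ x, toHyp F hs (permInt σ x) = permHyp σ (toHyp F hs x) := by
    intro x
    ext i
    rw [permHyp_apply, toHyp_apply, toHyp_apply]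
    have := congrFun (hF x) i
    exact congrArg _ this
  ext x
  constructor
  · rintro ⟨y, hy, hyx⟩
    refine ⟨permInt σ⁻¹ x, ?_, permInt_apply_inv σ x⟩
    change toHyp F hs _ ∈ S.1
    have h2 := hcomm (permInt σ⁻¹ x)
    rw [permInt_apply_inv, ← hyx] at h2
    have := (permHyp σ).injective h2
    rwa [← this]
  · rintro ⟨y, hy, rfl⟩
    exact ⟨toHyp F hs y, hy, (hcomm y).symm⟩

end Tside

section Vside
variable {n : ℕ}

/-- restrictions of integral affine functions to the points `v i` -/
def aff (v : Fin (n + 1) → (Fin n → ℤ)) : AddSubgroup (Fin (n + 1) → ℤ) where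
  carrier := {x | ∃ (l : Fin n → ℤ) (c : ℤ), ∀ i, x i = l ⬝ᵥ v i + c}
  zero_mem' := ⟨0, 0, by simp⟩
  add_mem' := by
    rintro x y ⟨l, c, h⟩ ⟨l', c', h'⟩
    refine ⟨l + l', c + c', fun i => ?_⟩
    rw [Pi.add_apply, h, h', add_dotProduct]; ring
  neg_mem' := by
    rintro x ⟨l, c, h⟩
    refine ⟨-l, -c, fun i => ?_⟩
    rw [Pi.neg_apply, h, neg_dotProduct]; ring

theorem mem_aff {v : Fin (n + 1) → (Fin n → ℤ)} {x} :
    x ∈ aff v ↔ ∃ (l : Fin n → ℤ) (c : ℤ), ∀ i, x i = l ⬝ᵥ v i + c := Iff.rfl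

theorem one_mem_aff (v : Fin (n + 1) → (Fin n → ℤ)) : 1 ∈ aff v := ⟨0, 1, by simp⟩

/-- edge matrix -/
def edge (v : Fin (n + 1) → (Fin n → ℤ)) : Matrix (Fin n) (Fin n) ℤ :=
  Matrix.of fun i j : Fin n => v j.succ i - v 0 i

/-- embedding with zero first coordinate -/
def emb : (Fin n → ℤ) →+ (Fin (n + 1) → ℤ) where
  toFun y := Fin.cons 0 y
  map_zero' := by ext i; refine Fin.cases ?_ (fun i => ?_) i <;> simp
  map_add' x y := by ext i; refine Fin.cases ?_ (fun i => ?_) i <;> simp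

theorem emb_zero (y : Fin n → ℤ) : emb y 0 = 0 := rfl
theorem emb_succ (y : Fin n → ℤ) (j : Fin n) : emb y j.succ = y j := rfl

theorem emb_tail (x : Fin (n + 1) → ℤ) : emb (fun j => x j.succ - x 0) = x - x 0 • 1 := by
  ext i
  refine Fin.cases ?_ (fun i => ?_) i
  · rw [emb_zero]; simp
  · rw [emb_succ]; simp

theorem index_comap_emb (T : AddSubgroup (Fin (n + 1) → ℤ)) (h1 : 1 ∈ T) :
    (T.comap emb).index = T.index := by
  rw [AddSubgroup.index_comap, ← AddSubgroup.relIndex_sup_right]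
  have : (emb (n := n)).range ⊔ T = ⊤ := by
    rw [eq_top_iff]
    intro x _
    have : x = emb (fun j => x j.succ - x 0) + x 0 • 1 := by rw [emb_tail]; simp
    rw [this]
    exact AddSubgroup.add_mem_sup ⟨_, rfl⟩ (T.zsmul_mem h1 _)
  rw [this, AddSubgroup.relIndex_top_right]

theorem eq_of_comap_emb {T T' : AddSubgroup (Fin (n + 1) → ℤ)} (h1 : 1 ∈ T) (h1' : 1 ∈ T')
    (h : T.comap emb = T'.comap emb) : T = T' := by
  ext x
  have key : ∀ T : AddSubgroup (Fin (n + 1) → ℤ), 1 ∈ T →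
      (x ∈ T ↔ (fun j : Fin n => x j.succ - x 0) ∈ T.comap emb) := by
    intro T h1
    rw [AddSubgroup.mem_comap, emb_tail]
    constructor
    · intro hx; exact T.sub_mem hx (T.zsmul_mem h1 _)
    · intro hx
      have := T.add_mem hx (T.zsmul_mem h1 (x 0))
      simpa using this
  rw [key T h1, key T' h1', h]

theorem comap_emb_aff (v : Fin (n + 1) → (Fin n → ℤ)) (y : Fin n → ℤ) :
    y ∈ (aff v).comap emb ↔ ∃ l : Fin n → ℤ, l ᵥ* edge v = y := by
  rw [AddSubgroup.mem_comap, mem_aff]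
  have hed : ∀ (l : Fin n → ℤ) j, (l ᵥ* edge v) j = l ⬝ᵥ v j.succ - l ⬝ᵥ v 0 := by
    intro l j
    rw [← dotProduct_sub]; rfl
  constructor
  · rintro ⟨l, c, h⟩
    refine ⟨l, ?_⟩
    ext j
    have h0 := h 0
    have hj := h j.succ
    rw [emb_zero] at h0
    rw [emb_succ] at hj
    rw [hed, hj]; linarith
  · rintro ⟨l, rfl⟩
    refine ⟨l, - (l ⬝ᵥ v 0), fun i => ?_⟩
    refine Fin.cases ?_ (fun i => ?_) i
    · rw [emb_zero]; ring
    · rw [emb_succ, hed]; ring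

theorem index_range (M : Matrix (Fin n) (Fin n) ℤ) (hM : M.det ≠ 0) (N : AddSubgroup (Fin n → ℤ))
    (hN : ∀ y, y ∈ N ↔ ∃ l : Fin n → ℤ, l ᵥ* M = y) : N.index = M.det.natAbs := by
  have hinj : Function.Injective (Matrix.toLin' Mᵀ) := by
    rw [← LinearMap.ker_eq_bot]
    by_contra h
    apply hM
    rw [← Matrix.det_transpose, ← LinearMap.det_toLin']
    exact LinearMap.det_eq_zero_iff_ker_ne_bot.2 h
  let e := LinearEquiv.ofInjective _ hinj
  have h := Submodule.natAbs_det_equiv (LinearMap.range (Matrix.toLin' Mᵀ)) e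
  have h2 : (LinearMap.range (Matrix.toLin' Mᵀ)).subtype ∘ₗ
      AddMonoidHom.toIntLinearMap (e : (Fin n → ℤ) →+ _) = Matrix.toLin' Mᵀ := by
    ext; rfl
  rw [h2, LinearMap.det_toLin', Matrix.det_transpose] at h
  rw [h]
  have h3 : N = (LinearMap.range (Matrix.toLin' Mᵀ)).toAddSubgroup := by
    ext y
    rw [hN, Submodule.mem_toAddSubgroup, LinearMap.mem_range]
    simp only [Matrix.toLin'_apply, Matrix.mulVec_transpose]
  rw [h3]; rfl

theorem index_aff (v : Fin (n + 1) → (Fin n → ℤ)) (h : (edge v).det ≠ 0) :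
    (aff v).index = (edge v).det.natAbs := by
  rw [← index_comap_emb _ (one_mem_aff v)]
  exact index_range _ h _ (comap_emb_aff v)

theorem inj_of_det (v : Fin (n + 1) → (Fin n → ℤ)) (h : (edge v).det ≠ 0) :
    Function.Injective v := by
  intro i j hij
  by_contra hne
  have h1 := (aff v).nsmul_index_mem (Pi.single i 1)
  obtain ⟨l, c, hl⟩ := h1
  have hi := hl i
  have hj := hl j
  rw [← hij, ← hi] at hj
  rw [index_aff v h] at hj
  simp [Ne.symm hne] at hj
  exact h (abs_eq_zero.1 hj.symm)

theorem exists_aff (T : AddSubgroup (Fin (n + 1) → ℤ)) (h1 : 1 ∈ T) (hT : T.index ≠ 0) :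
    ∃ v : Fin (n + 1) → (Fin n → ℤ), (edge v).det ≠ 0 ∧ aff v = T := by
  have hN : (T.comap emb).index ≠ 0 := by rwa [index_comap_emb T h1]
  set N : Submodule ℤ (Fin n → ℤ) := AddSubgroup.toIntSubmodule (T.comap emb) with hNdef
  have hfin : Finite ((Fin n → ℤ) ⧸ N) := by
    haveI : (T.comap emb).FiniteIndex := ⟨hN⟩
    exact (inferInstance : Finite ((Fin n → ℤ) ⧸ (T.comap emb)))
  have hrk := (Submodule.finiteQuotient_iff N).1 hfin
  rw [Module.finrank_fin_fun] at hrk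
  let b : Module.Basis (Fin n) ℤ N := (Module.finBasis ℤ N).reindex (finCongr hrk)
  let v : Fin (n + 1) → (Fin n → ℤ) := Fin.cons 0 (fun j i => (b i).1 j)
  have hed : edge v = Matrix.of fun i j => (b i).1 j := by
    ext i j
    simp [edge, v]
  have hrange : ∀ y, (∃ l : Fin n → ℤ, l ᵥ* edge v = y) ↔ y ∈ T.comap emb := by
    intro y
    have hs : ∀ l : Fin n → ℤ, l ᵥ* edge v = ((∑ i, l i • b i : N) : Fin n → ℤ) := by
      intro l
      ext j
      rw [hed]
      simp [Matrix.vecMul, dotProduct]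
    constructor
    · rintro ⟨l, rfl⟩
      rw [hs]
      exact (∑ i, l i • b i : N).2
    · intro hy
      refine ⟨fun i => b.repr ⟨y, hy⟩ i, ?_⟩
      rw [hs, b.sum_repr]
  refine ⟨v, ?_, ?_⟩
  · intro h0
    rw [← Matrix.exists_vecMul_eq_zero_iff] at h0
    obtain ⟨l, hl, h0⟩ := h0
    apply hl
    have hli := b.linearIndependent
    rw [Fintype.linearIndependent_iff] at hli
    ext i
    refine hli l ?_ i
    apply Subtype.ext
    refine Eq.trans ?_ h0
    ext j
    rw [hed]
    simp [Matrix.vecMul, dotProduct]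
  · apply eq_of_comap_emb (one_mem_aff v) h1
    ext y
    rw [comap_emb_aff, hrange]

theorem aff_perm (v : Fin (n + 1) → (Fin n → ℤ)) (σ : Equiv.Perm (Fin (n + 1))) :
    (aff v).map (permInt σ) = aff (v ∘ ⇑σ⁻¹) := by
  ext x
  constructor
  · rintro ⟨y, ⟨l, c, h⟩, rfl⟩
    exact ⟨l, c, fun i => h _⟩
  · rintro ⟨l, c, h⟩
    refine ⟨permInt σ⁻¹ x, ⟨l, c, fun i => ?_⟩, permInt_apply_inv σ x⟩
    rw [permInt_apply, h]; simp

theorem aff_unimod (v w : Fin (n + 1) → (Fin n → ℤ)) (L : Matrix (Fin n) (Fin n) ℤ)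
    (t : Fin n → ℤ) (hL : IsUnit L.det) (h : ∀ i, w i = L *ᵥ v i + t) : aff w = aff v := by
  ext x
  constructor
  · rintro ⟨l, c, hx⟩
    refine ⟨l ᵥ* L, l ⬝ᵥ t + c, fun i => ?_⟩
    rw [hx, h, dotProduct_add, dotProduct_mulVec]; ring
  · rintro ⟨l, c, hx⟩
    refine ⟨l ᵥ* L⁻¹, - ((l ᵥ* L⁻¹) ⬝ᵥ t) + c, fun i => ?_⟩
    rw [hx, h, dotProduct_add, dotProduct_mulVec, Matrix.vecMul_vecMul,
      Matrix.nonsing_inv_mul _ hL, Matrix.vecMul_one]; ring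

theorem unimod_of_aff (v w : Fin (n + 1) → (Fin n → ℤ)) (hw : (edge w).det ≠ 0)
    (h : aff w = aff v) : ∃ (L : Matrix (Fin n) (Fin n) ℤ) (t : Fin n → ℤ),
      (L.det = 1 ∨ L.det = -1) ∧ ∀ i, w i = L *ᵥ v i + t := by
  have h1 : ∀ j : Fin n, (fun i => w i j) ∈ aff v := by
    intro j
    rw [← h]
    exact ⟨Pi.single j 1, 0, by simp⟩
  choose L t hLt using h1
  have hwv : ∀ i, w i = Matrix.of L *ᵥ v i + t := by
    intro i; ext j
    exact hLt j i
  refine ⟨Matrix.of L, t, ?_, hwv⟩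
  have hed : edge w = Matrix.of L * edge v := by
    ext i j
    have : (Matrix.of L * edge v) i j = L i ⬝ᵥ (v j.succ - v 0) := rfl
    rw [this, dotProduct_sub]
    change w j.succ i - w 0 i = _
    have e1 := hLt i j.succ
    have e2 := hLt i 0
    simp only at e1 e2
    rw [e1, e2]; ring
  have hdet := congrArg Matrix.det hed
  rw [Matrix.det_mul] at hdet
  have hv : (edge v).det ≠ 0 := by
    intro h0; rw [h0, mul_zero] at hdet; exact hw hdet
  have hi := index_aff w hw
  rw [h, index_aff v hv, hdet, Int.natAbs_mul] at hi
  have hpos : 0 < (edge v).det.natAbs := Int.natAbs_pos.2 hv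
  have : (Matrix.of L).det.natAbs = 1 := by
    have : (Matrix.of L).det.natAbs * (edge v).det.natAbs = 1 * (edge v).det.natAbs := by
      rw [one_mul]; exact hi.symm
    exact Nat.eq_of_mul_eq_mul_right hpos this
  exact Int.natAbs_eq_iff.1 this

theorem exists_perm_of_range {α : Type*} (v w : Fin (n + 1) → α) (hv : Function.Injective v)
    (hw : Function.Injective w) (h : Set.range v = Set.range w) :
    ∃ σ : Equiv.Perm (Fin (n + 1)), v = w ∘ σ := by
  refine ⟨(Equiv.ofInjective v hv).trans ((Equiv.setCongr h).trans (Equiv.ofInjective w hw).symm), ?_⟩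
  ext i
  simp [Equiv.apply_ofInjective_symm hw]

abbrev VSub (n k : ℕ) := {V : Set (Fin n → ℤ) // IsLatticeSimplex n k V}

theorem exists_vert {k : ℕ} (hk : k ≠ 0) (V : VSub n k) : ∃ v : Fin (n + 1) → (Fin n → ℤ),
    Set.range v = V.1 ∧ (edge v).det.natAbs = k ∧ (edge v).det ≠ 0 := by
  obtain ⟨-, v, h1, h2⟩ := V.2
  refine ⟨v, h1, h2, ?_⟩
  intro h
  apply hk
  rw [← h2]
  change (edge v).det.natAbs = 0
  rw [h]; rfl

theorem card_quot_eq {G α β : Type*} [Group G] [MulAction G β] (R : α → α → Prop) (f : α → β)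
    (hR : ∀ a a', R a a' ↔ ∃ g : G, g • f a = f a') (hs : ∀ b, ∃ a, ∃ g : G, g • f a = b) :
    Nat.card (Quot R) = Nat.card (MulAction.orbitRel.Quotient G β) := by
  have hor : ∀ b b' : β, (MulAction.orbitRel G β) b b' ↔ ∃ g : G, g • b = b' := by
    intro b b'
    rw [MulAction.orbitRel_apply, MulAction.mem_orbit_symm, MulAction.mem_orbit_iff]
  refine Nat.card_congr (Equiv.ofBijective
    (Quot.lift (fun a => (Quotient.mk (MulAction.orbitRel G β) (f a)))
      (fun a a' h => Quotient.sound ((hor _ _).2 ((hR a a').1 h)))) ⟨?_, ?_⟩)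
  · rintro ⟨a⟩ ⟨a'⟩ h
    exact Quot.sound ((hR a a').2 ((hor _ _).1 (Quotient.exact h)))
  · rintro ⟨b⟩
    obtain ⟨a, g, h⟩ := hs b
    exact ⟨Quot.mk _ a, Quotient.sound ((hor _ _).2 ⟨g, h⟩)⟩

theorem card_V (k : ℕ) (hk : k ≠ 0) :
    Nat.card (Quot fun V₁ V₂ : {V : Set (Fin n → ℤ) // IsLatticeSimplex n k V} =>
      ∃ (L : Matrix (Fin n) (Fin n) ℤ) (t : Fin n → ℤ),
        (L.det = 1 ∨ L.det = -1) ∧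
        V₁.1 = (fun x => L.mulVec x + t) '' V₂.1) =
    Nat.card (MulAction.orbitRel.Quotient (Equiv.Perm (Fin (n + 1))) (TSub n k)) := by
  choose ve hr hd hd0 using exists_vert (n := n) hk
  refine card_quot_eq _ (fun V => (⟨aff (ve V), one_mem_aff _, by
    rw [index_aff _ (hd0 V), hd V]⟩ : TSub n k)) ?_ ?_
  · intro V₁ V₂
    constructor
    · rintro ⟨L, t, hL, hV⟩
      have hLu : IsUnit L.det := Int.isUnit_iff.2 hL
      have hinj : Function.Injective (fun x => L.mulVec x + t) := by
        intro x y hxy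
        have h1 : L *ᵥ x = L *ᵥ y := add_right_cancel hxy
        exact Matrix.mulVec_injective_of_isUnit ((Matrix.isUnit_iff_isUnit_det L).2 hLu) h1
      obtain ⟨σ, hσ⟩ := exists_perm_of_range (ve V₁) ((fun x => L.mulVec x + t) ∘ ve V₂)
        (inj_of_det _ (hd0 V₁)) (hinj.comp (inj_of_det _ (hd0 V₂)))
        (by rw [Set.range_comp, hr, hr, hV])
      refine ⟨σ, Subtype.ext ?_⟩
      rw [smulT_val]
      change (aff (ve V₁)).map _ = aff (ve V₂)
      rw [aff_perm]
      refine aff_unimod _ _ L t hLu fun i => ?_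
      rw [hσ]; simp
    · rintro ⟨σ, h⟩
      have h := congrArg Subtype.val h
      rw [smulT_val] at h
      change (aff (ve V₁)).map _ = aff (ve V₂) at h
      have h2 : aff (ve V₁) = aff (ve V₂ ∘ σ) := by
        have e := aff_perm (ve V₂) σ⁻¹
        rw [inv_inv] at e
        rw [← e, ← h, AddSubgroup.map_map]
        have : (permInt σ⁻¹).comp (permInt σ) = AddMonoidHom.id _ :=
          AddMonoidHom.ext fun x => permInt_inv_apply σ x
        rw [this, AddSubgroup.map_id]
      obtain ⟨L, t, hL, hw⟩ := unimod_of_aff _ _ (hd0 V₁) h2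
      refine ⟨L, t, hL, ?_⟩
      have : ve V₁ = (fun x => L.mulVec x + t) ∘ (ve V₂) ∘ σ := funext hw
      rw [← hr V₁, ← hr V₂, this, Set.range_comp, σ.surjective.range_comp]
  · rintro ⟨T, h1, hT⟩
    obtain ⟨v, hv0, hv⟩ := exists_aff T h1 (by rwa [hT])
    have hk' : (edge v).det.natAbs = k := by rw [← index_aff v hv0, hv, hT]
    have hinj := inj_of_det v hv0
    let V : VSub n k := ⟨Set.range v, by
      rw [Set.ncard_range_of_injective hinj]; simp, v, rfl, hk'⟩
    obtain ⟨σ, hσ⟩ := exists_perm_of_range (ve V) v (inj_of_det _ (hd0 V)) hinj (hr V)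
    refine ⟨V, σ, Subtype.ext ?_⟩
    rw [smulT_val]
    change (aff (ve V)).map _ = T
    rw [aff_perm, ← hv]
    congr 1
    ext i
    rw [hσ]; simp

end Vside

end AnProof

/-- Proposition 1 of the paper, first half (`β_{n,k} = τ_{n,k}`): the number of isometry
classes of index-`k` subgroups of the root lattice `A_n` equals the number of unimodular
equivalence classes of `n`-dimensional lattice simplices of normalized volume `k`. -/
theorem card_sublattices_An_eq_card_simplices (n k : ℕ) (hn : 1 ≤ n) (hk : 1 ≤ k) :
    Nat.card (Quot fun S₁ S₂ : {S : AddSubgroup (Hyp n) //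
        S ≤ rootAn n ∧ S.relIndex (rootAn n) = k} =>
      ∃ g : Hyp n →ₗᵢ[ℝ] Hyp n,
        g '' (rootAn n : Set (Hyp n)) = rootAn n ∧
        g '' (S₁.1 : Set (Hyp n)) = S₂.1) =
    Nat.card (Quot fun V₁ V₂ : {V : Set (Fin n → ℤ) // IsLatticeSimplex n k V} =>
      ∃ (L : Matrix (Fin n) (Fin n) ℤ) (t : Fin n → ℤ),
        (L.det = 1 ∨ L.det = -1) ∧
        V₁.1 = (fun x => L.mulVec x + t) '' V₂.1) := by
  have hk0 : k ≠ 0 := by omega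
  rw [AnProof.card_V k hk0, ← AnProof.card_A_eq_card_T k hk0]
  exact AnProof.card_quot_eq _ (fun S : AnProof.ASub n k => S)
    (fun S₁ S₂ => AnProof.relA_iff hn S₁ S₂) (fun S => ⟨S, 1, one_smul _ S⟩)
end
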